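/- Let p be a prime and let M be a filtered (φ,N)-module over ℚ_p. For (x, y, z) ∈ M × M × M with N(y) = (p·φ − 1)(z), let E(x,y,z) be M ⊕ ℚ_p·e with φ_E|_M = φ, φ_E(e) = e + y, N_E|_M = N, N_E(e) = z, Fil^i E = Fil^i M for i ≥ 1 and Fil^i E = Fil^i M + ℚ_p·(e + x) for i ≤ 0. Then: (a) E(x,y,z) is a filtered (φ,N)-module over ℚ_p and, with the inclusion of M, an extension of the unit object 1 by M; (b) every extension of 1 by M is equivalent to E(x,y,z) for some (x,y,z) with N(y) = (p·φ − 1)(z); (c) E(x,y,z) and E(x',y',z') are equivalent extensions if and only if there exists u ∈ M with x' ∈ x + u + Fil⁰M, y' = y − (φ − 1)(u) and z' = z − N(u). Consequently the set of equivalence classes of extensions of 1 by M is in natural bijection with H¹(C•_st(M)). (This is Proposition 1.4.4(ii) at the level of filtered (φ,N)-modules: H¹_st is computed by the complex C•_st.) -/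

import Mathlib

/-!
An extension `V` of `1` by `M` is split as a vector space by the choice of a lift `e` of `1`.
Relative to such a lift, `φ` and `N` are recorded by `y = φ e - e` and `z = N e` in `M`, and the
filtration by any `x` with `e + x ∈ Fil⁰ V`; conversely `(x,y,z)` defines a filtered
`(φ,N)`-module exactly when `N y = (pφ - 1) z`. Replacing the lift `e` by another one changes
`(x,y,z)` by a coboundary, and `x` only matters modulo `Fil⁰ M`, so extension classes are cocycles
modulo coboundaries, i.e. `H¹(C•_st(M))`.

The filtration is handled through `mem_ExtConsSt_Fil`; the extension property, the reduction of
an arbitrary extension to some `E(x,y,z)`, the criterion for equivalence and the comparison with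
`H¹` are `ExtConsSt_isExtensionSt`, `exists_equiv_ExtConsSt`, `extEquivSt_ExtConsSt_iff` and
`classSt_eq_iff`.
-/

/-!
Statement 5 (Benois, Proposition 1.4.4(ii) at the level of filtered `(φ,N)`-modules).

Let `M` be a filtered `(φ,N)`-module over `ℚ_p`.  For `(x,y,z) ∈ M³` with
`N(y) = (p·φ − 1)(z)` let `E(x,y,z)` be `M ⊕ ℚ_p·e` with `φ_E|_M = φ`, `φ_E(e) = e + y`,
`N_E|_M = N`, `N_E(e) = z`, `Fil^i E = Fil^i M` for `i ≥ 1` and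
`Fil^i E = Fil^i M + ℚ_p·(e+x)` for `i ≤ 0`.  Then (a) `E(x,y,z)` is a filtered
`(φ,N)`-module and an extension of the unit object `1` by `M`; (b) every extension of `1`
by `M` is equivalent to some `E(x,y,z)` with `N(y) = (p·φ−1)(z)`; (c) `E(x,y,z)` and
`E(x',y',z')` are equivalent iff there is `u ∈ M` with `x' ∈ x + u + Fil⁰M`,
`y' = y − (φ−1)(u)` and `z' = z − N(u)`.  Consequently the set of equivalence classes of
extensions of `1` by `M` is in bijection with `H¹(C•_st(M))`.

An extension of `1` by `M` is encoded as a filtered `(φ,N)`-module `V` together with an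
injective strict morphism `ι : M → V` and a linear form `π : V → ℚ_p` realizing the
quotient `V/ι(M)` together with its identification with the unit object `1`.
-/

open LinearMap Submodule

/-- The raw data of a filtered `(φ,N)`-module structure on `V`. -/
structure PreFPNMod (p : ℕ) [Fact p.Prime] (V : Type) [AddCommGroup V]
    [Module ℚ_[p] V] where
  phi : V →ₗ[ℚ_[p]] V
  N : V →ₗ[ℚ_[p]] V
  Fil : ℤ → Submodule ℚ_[p] V

section

variable (p : ℕ) [Fact p.Prime]

/-- `S` is a filtered `(φ,N)`-module: `φ` is an automorphism, `N` is nilpotent,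
`N φ = p φ N`, and the filtration is decreasing, exhaustive and separated, on a
finite-dimensional space. -/
def IsFPNMod {V : Type} [AddCommGroup V] [Module ℚ_[p] V]
    (S : PreFPNMod p V) : Prop :=
  Function.Bijective S.phi ∧ IsNilpotent S.N ∧
    S.N ∘ₗ S.phi = (p : ℚ_[p]) • (S.phi ∘ₗ S.N) ∧
    Antitone S.Fil ∧
    (∃ n : ℤ, S.Fil n = ⊤) ∧ (∃ n : ℤ, S.Fil n = ⊥) ∧ FiniteDimensional ℚ_[p] V

/-- `(V, ι, π)` is an extension of the unit object `1` by `M`:  `V` is a filtered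
`(φ,N)`-module, `ι : M → V` is an injective strict morphism, and `π : V → ℚ_p`
identifies `V/ι(M)` (with the induced `φ`, `N` and the image filtration) with the unit
object `1`. -/
def IsExtensionSt {M V : Type} [AddCommGroup M] [Module ℚ_[p] M]
    [AddCommGroup V] [Module ℚ_[p] V] (SM : PreFPNMod p M) (SV : PreFPNMod p V)
    (ι : M →ₗ[ℚ_[p]] V) (π : V →ₗ[ℚ_[p]] ℚ_[p]) : Prop :=
  IsFPNMod p SV ∧
  Function.Injective ι ∧
  SV.phi ∘ₗ ι = ι ∘ₗ SM.phi ∧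
  SV.N ∘ₗ ι = ι ∘ₗ SM.N ∧
  (∀ i : ℤ, SM.Fil i = (SV.Fil i).comap ι) ∧
  π ∘ₗ SV.phi = π ∧
  π ∘ₗ SV.N = 0 ∧
  LinearMap.ker π = LinearMap.range ι ∧
  (∀ i : ℤ, i ≤ 0 → (SV.Fil i).map π = ⊤) ∧
  (∀ i : ℤ, 0 < i → (SV.Fil i).map π = ⊥)

/-- Equivalence of two extensions of `1` by `M`: an isomorphism of filtered
`(φ,N)`-modules compatible with the inclusions of `M` and inducing the identity on the
quotients identified with `1`. -/
def ExtEquivSt {M V V' : Type} [AddCommGroup M] [Module ℚ_[p] M]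
    [AddCommGroup V] [Module ℚ_[p] V]
    [AddCommGroup V'] [Module ℚ_[p] V'] (SV : PreFPNMod p V)
    (ι : M →ₗ[ℚ_[p]] V) (π : V →ₗ[ℚ_[p]] ℚ_[p]) (SV' : PreFPNMod p V')
    (ι' : M →ₗ[ℚ_[p]] V') (π' : V' →ₗ[ℚ_[p]] ℚ_[p]) : Prop :=
  ∃ θ : V →ₗ[ℚ_[p]] V', Function.Bijective θ ∧
    θ ∘ₗ SV.phi = SV'.phi ∘ₗ θ ∧
    θ ∘ₗ SV.N = SV'.N ∘ₗ θ ∧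
    (∀ i : ℤ, (SV.Fil i).map θ = SV'.Fil i) ∧
    θ ∘ₗ ι = ι' ∧ π' ∘ₗ θ = π

variable {M : Type} [AddCommGroup M] [Module ℚ_[p] M]

/-- The extension `E(x,y,z) = M ⊕ ℚ_p·e`, `φ_E(e) = e + y`, `N_E(e) = z`,
`Fil^i E(x,y,z) = Fil^i M + ℚ_p·(e+x)` for `i ≤ 0` and `Fil^i M` for `i ≥ 1`. -/
noncomputable def ExtConsSt (SM : PreFPNMod p M) (x y z : M) :
    PreFPNMod p (M × ℚ_[p]) where
  phi := LinearMap.prod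
    (SM.phi ∘ₗ LinearMap.fst ℚ_[p] M ℚ_[p] +
      (LinearMap.snd ℚ_[p] M ℚ_[p]).smulRight y)
    (LinearMap.snd ℚ_[p] M ℚ_[p])
  N := LinearMap.prod
    (SM.N ∘ₗ LinearMap.fst ℚ_[p] M ℚ_[p] +
      (LinearMap.snd ℚ_[p] M ℚ_[p]).smulRight z)
    0
  Fil := fun i => (SM.Fil i).map (LinearMap.inl ℚ_[p] M ℚ_[p]) ⊔
    (if i ≤ 0 then Submodule.span ℚ_[p] {((x, 1) : M × ℚ_[p])} else ⊥)

/-- The first differential `g : M → t_M ⊕ M ⊕ M`, `g(x) = (x mod Fil⁰M, (1−φ)x, −Nx)`. -/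
noncomputable def gSt (SM : PreFPNMod p M) :
    M →ₗ[ℚ_[p]] (M ⧸ SM.Fil 0) × M × M :=
  LinearMap.prod (SM.Fil 0).mkQ (LinearMap.prod (LinearMap.id - SM.phi) (-SM.N))

/-- The second differential `h : t_M ⊕ M ⊕ M → M`, `h(x̄,y,z) = N(y) − (p·φ − 1)(z)`. -/
noncomputable def hSt (SM : PreFPNMod p M) :
    (M ⧸ SM.Fil 0) × M × M →ₗ[ℚ_[p]] M :=
  SM.N ∘ₗ (LinearMap.fst ℚ_[p] M M ∘ₗ LinearMap.snd ℚ_[p] (M ⧸ SM.Fil 0) (M × M)) -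
    ((p : ℚ_[p]) • SM.phi - LinearMap.id) ∘ₗ
      (LinearMap.snd ℚ_[p] M M ∘ₗ LinearMap.snd ℚ_[p] (M ⧸ SM.Fil 0) (M × M))

/-- `H¹(C•_st(M)) = ker h / im g`. -/
noncomputable abbrev H1St (SM : PreFPNMod p M) :=
  ↥(LinearMap.ker (hSt p SM)) ⧸
    Submodule.comap (LinearMap.ker (hSt p SM)).subtype (LinearMap.range (gSt p SM))

/-- The relation on cocycles `(x,y,z)` (with `N y = (pφ−1) z`) identifying `E(x,y,z)`
and `E(x',y',z')` when they are equivalent extensions. -/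
def CobRelSt (SM : PreFPNMod p M)
    (a b : {t : M × M × M // SM.N t.2.1 = ((p : ℚ_[p]) • SM.phi - LinearMap.id : M →ₗ[ℚ_[p]] M) t.2.2}) :
    Prop :=
  ∃ u : M, b.1.1 - a.1.1 - u ∈ SM.Fil 0 ∧
    b.1.2.1 = a.1.2.1 - (SM.phi u - u) ∧ b.1.2.2 = a.1.2.2 - SM.N u

variable {p}

/-- Coordinatewise description of the filtration on `E(x,y,z)`: writing
`m + c·e = (m - c·x) + c·(e + x)`, this vector lies in `Fil^i` iff `m - c·x ∈ Fil^i M` and, for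
`i > 0`, `c = 0`. -/
theorem mem_ExtConsSt_Fil (SM : PreFPNMod p M) (x y z : M) (i : ℤ) (v : M × ℚ_[p]) :
    v ∈ (ExtConsSt p SM x y z).Fil i ↔ (0 < i → v.2 = 0) ∧ v.1 - v.2 • x ∈ SM.Fil i := by
  obtain ⟨m, c⟩ := v
  simp only [ExtConsSt]
  split_ifs with hi
  · rw [Submodule.mem_sup]
    constructor
    · rintro ⟨a, ⟨f, hf, rfl⟩, b, hb, hab⟩
      obtain ⟨d, rfl⟩ := Submodule.mem_span_singleton.1 hb
      simp only [LinearMap.inl_apply, Prod.smul_mk, Prod.mk_add_mk, Prod.mk.injEq] at hab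
      obtain ⟨rfl, rfl⟩ := hab
      refine ⟨fun h => absurd h (not_lt.2 hi), ?_⟩
      simpa using hf
    · rintro ⟨-, h⟩
      exact ⟨_, ⟨_, h, rfl⟩, c • (x, 1), Submodule.smul_mem _ _ (Submodule.mem_span_singleton_self _),
        by simp⟩
  · rw [sup_bot_eq]
    have hi' : 0 < i := not_le.1 hi
    constructor
    · rintro ⟨f, hf, hab⟩
      simp only [LinearMap.inl_apply, Prod.mk.injEq] at hab
      obtain ⟨rfl, rfl⟩ := hab
      exact ⟨fun _ => rfl, by simpa using hf⟩
    · rintro ⟨h, h'⟩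
      obtain rfl : c = 0 := h hi'
      exact ⟨m, by simpa using h', rfl⟩

theorem ExtConsSt_phi_apply (SM : PreFPNMod p M) (x y z : M) (v : M × ℚ_[p]) :
    (ExtConsSt p SM x y z).phi v = (SM.phi v.1 + v.2 • y, v.2) := rfl

theorem ExtConsSt_N_apply (SM : PreFPNMod p M) (x y z : M) (v : M × ℚ_[p]) :
    (ExtConsSt p SM x y z).N v = (SM.N v.1 + v.2 • z, 0) := rfl

/-- The cocycle condition `N y = (pφ - 1) z` is the relation `N φ = p φ N` evaluated at `e`. -/
theorem ExtConsSt_isFPNMod {SM : PreFPNMod p M} (hM : IsFPNMod p SM) (x y z : M)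
    (h : SM.N y = ((p : ℚ_[p]) • SM.phi - LinearMap.id : M →ₗ[ℚ_[p]] M) z) :
    IsFPNMod p (ExtConsSt p SM x y z) := by
  obtain ⟨hφ, ⟨k, hk⟩, hNφ, hanti, ⟨a, ha⟩, ⟨b, hb⟩, hfin⟩ := hM
  refine ⟨⟨?_, ?_⟩, ⟨k + 1, ?_⟩, ?_, ?_, ⟨min a 0, ?_⟩, ⟨max b 1, ?_⟩, inferInstance⟩
  · rintro ⟨m, c⟩ ⟨m', c'⟩ hv
    simp only [ExtConsSt_phi_apply, Prod.mk.injEq] at hv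
    obtain ⟨h1, rfl⟩ := hv
    rw [hφ.1 (add_right_cancel h1)]
  · rintro ⟨m, c⟩
    obtain ⟨w, hw⟩ := hφ.2 (m - c • y)
    exact ⟨(w, c), by simp [ExtConsSt_phi_apply, hw]⟩
  · have key : ∀ (n : ℕ) (m : M),
        ((ExtConsSt p SM x y z).N ^ n) (m, 0) = ((SM.N ^ n) m, 0) := by
      intro n
      induction n with
      | zero => intro m; rfl
      | succ n ih =>
        intro m
        rw [pow_succ, pow_succ, Module.End.mul_apply, Module.End.mul_apply,
          ExtConsSt_N_apply, zero_smul, add_zero, ih]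
    refine LinearMap.ext fun v => ?_
    rw [pow_succ, Module.End.mul_apply, ExtConsSt_N_apply, key, hk]
    rfl
  · refine LinearMap.ext fun v => ?_
    have h1 := LinearMap.congr_fun hNφ v.1
    simp only [LinearMap.comp_apply, LinearMap.smul_apply, LinearMap.sub_apply,
      LinearMap.id_apply] at h1 h
    simp only [LinearMap.comp_apply, LinearMap.smul_apply, ExtConsSt_phi_apply,
      ExtConsSt_N_apply, map_add, map_smul, h1, h]
    ext
    · simp only [Prod.smul_mk, zero_smul, add_zero]
      module
    · simp
  · intro i j hij v hv
    rw [mem_ExtConsSt_Fil] at hv ⊢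
    exact ⟨fun hi => hv.1 (hi.trans_le hij), hanti hij hv.2⟩
  · refine eq_top_iff.2 fun v _ => ?_
    rw [mem_ExtConsSt_Fil]
    exact ⟨fun hi => absurd hi (by simp), hanti (min_le_left a 0) (ha ▸ Submodule.mem_top)⟩
  · refine eq_bot_iff.2 fun v hv => ?_
    rw [mem_ExtConsSt_Fil] at hv
    have h2 : v.2 = 0 := hv.1 (by simp)
    have h1 := hanti (le_max_left b 1) hv.2
    rw [hb, Submodule.mem_bot, h2, zero_smul, sub_zero] at h1
    exact Prod.ext h1 h2

theorem ExtConsSt_isExtensionSt {SM : PreFPNMod p M} (hM : IsFPNMod p SM) (x y z : M)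
    (h : SM.N y = ((p : ℚ_[p]) • SM.phi - LinearMap.id : M →ₗ[ℚ_[p]] M) z) :
    IsExtensionSt p SM (ExtConsSt p SM x y z)
      (LinearMap.inl ℚ_[p] M ℚ_[p]) (LinearMap.snd ℚ_[p] M ℚ_[p]) := by
  refine ⟨ExtConsSt_isFPNMod hM x y z h, LinearMap.inl_injective, ?_, ?_, fun i => ?_, rfl, rfl,
    ?_, fun i hi => ?_, fun i hi => ?_⟩
  · ext m <;> simp [ExtConsSt_phi_apply]
  · ext m <;> simp [ExtConsSt_N_apply]
  · ext m
    simp [mem_ExtConsSt_Fil]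
  · exact (LinearMap.range_inl ℚ_[p] M ℚ_[p]).symm
  · refine eq_top_iff.2 fun c _ => ⟨(c • x, c), ?_, rfl⟩
    rw [SetLike.mem_coe, mem_ExtConsSt_Fil]
    exact ⟨fun h => absurd h (not_lt.2 hi), by simp⟩
  · refine eq_bot_iff.2 ?_
    rintro _ ⟨v, hv, rfl⟩
    exact ((mem_ExtConsSt_Fil SM x y z i v).1 hv).1 hi

/-- Every extension is some `E(0,y,z)`: a lift `e ∈ Fil⁰ V` of `1` splits `V` as `ι M ⊕ ℚ_p·e`
compatibly with the filtrations, and `y`, `z` are `φ e - e` and `N e`. -/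
theorem exists_equiv_ExtConsSt {SM : PreFPNMod p M} {V : Type} [AddCommGroup V]
    [Module ℚ_[p] V] {SV : PreFPNMod p V} {ι : M →ₗ[ℚ_[p]] V} {π : V →ₗ[ℚ_[p]] ℚ_[p]}
    (hE : IsExtensionSt p SM SV ι π) :
    ∃ x y z : M, SM.N y = ((p : ℚ_[p]) • SM.phi - LinearMap.id : M →ₗ[ℚ_[p]] M) z ∧
      ExtEquivSt p SV ι π (ExtConsSt p SM x y z)
        (LinearMap.inl ℚ_[p] M ℚ_[p]) (LinearMap.snd ℚ_[p] M ℚ_[p]) := by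
  obtain ⟨⟨-, -, hNφ, hanti, -, -, -⟩, hinj, hφι, hNι, hFil, hπφ, hπN, hker, hpos, hneg⟩ := hE
  replace hNφ : ∀ v, SV.N (SV.phi v) = (p : ℚ_[p]) • SV.phi (SV.N v) := LinearMap.congr_fun hNφ
  replace hφι : ∀ m, SV.phi (ι m) = ι (SM.phi m) := LinearMap.congr_fun hφι
  replace hNι : ∀ m, SV.N (ι m) = ι (SM.N m) := LinearMap.congr_fun hNι
  replace hπφ : ∀ v, π (SV.phi v) = π v := LinearMap.congr_fun hπφ
  replace hπN : ∀ v, π (SV.N v) = 0 := LinearMap.congr_fun hπN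
  have hlift : ∀ v, π v = 0 → ∃ m, ι m = v := fun v hv => by
    have : v ∈ LinearMap.ker π := hv
    rwa [hker] at this
  have hπι : ∀ m, π (ι m) = 0 := fun m => by
    have : ι m ∈ LinearMap.ker π := hker ▸ LinearMap.mem_range_self ι m
    exact this
  -- A lift of `1` lying in `Fil⁰`; it plays the role of `e`, so that `x = 0`.
  obtain ⟨e, he, hπe⟩ : (1 : ℚ_[p]) ∈ (SV.Fil 0).map π := hpos 0 le_rfl ▸ Submodule.mem_top
  obtain ⟨y, hy⟩ := hlift (SV.phi e - e) (by rw [map_sub, hπφ, sub_self])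
  obtain ⟨z, hz⟩ := hlift (SV.N e) (hπN e)
  have hφe : SV.phi e = e + ι y := by rw [hy]; abel
  let ψ₀ : M × ℚ_[p] →ₗ[ℚ_[p]] V := ι.coprod (LinearMap.toSpanSingleton ℚ_[p] V e)
  have hψ₀ : ∀ v, ψ₀ v = ι v.1 + v.2 • e := fun v => by simp [ψ₀]
  have hπψ₀ : ∀ v, π (ψ₀ v) = v.2 := fun v => by simp [hψ₀, hπι, hπe]
  have hbij : Function.Bijective ψ₀ := by
    refine ⟨(injective_iff_map_eq_zero ψ₀).2 fun v hv => ?_, fun v => ?_⟩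
    · have h2 : v.2 = 0 := by rw [← hπψ₀, hv, map_zero]
      rw [hψ₀, h2, zero_smul, add_zero] at hv
      exact Prod.ext (hinj (hv.trans (map_zero ι).symm)) h2
    · obtain ⟨m, hm⟩ := hlift (v - π v • e) (by simp [hπe])
      exact ⟨(m, π v), by rw [hψ₀, hm]; abel⟩
  let ψ := LinearEquiv.ofBijective ψ₀ hbij
  have hψ : ∀ v, ψ v = ι v.1 + v.2 • e := hψ₀
  refine ⟨0, y, z, hinj ?_, ψ.symm.toLinearMap, ψ.symm.bijective, ?_, ?_, fun i => ?_, ?_, ?_⟩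
  · -- Apply `N φ = p φ N` to `e`.
    have h1 := hNφ e
    rw [hφe, map_add, ← hz, hNι, hφι] at h1
    simp only [LinearMap.sub_apply, LinearMap.smul_apply, LinearMap.id_apply, map_sub, map_smul,
      ← h1]
    abel
  · refine LinearMap.ext fun v => ?_
    obtain ⟨w, rfl⟩ := ψ.surjective v
    simp only [LinearMap.comp_apply, LinearEquiv.coe_coe, LinearEquiv.symm_apply_apply]
    rw [LinearEquiv.symm_apply_eq, ExtConsSt_phi_apply, hψ, hψ]
    simp only [map_add, map_smul, hφι, hφe]
    module
  · refine LinearMap.ext fun v => ?_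
    obtain ⟨w, rfl⟩ := ψ.surjective v
    simp only [LinearMap.comp_apply, LinearEquiv.coe_coe, LinearEquiv.symm_apply_apply]
    rw [LinearEquiv.symm_apply_eq, ExtConsSt_N_apply, hψ, hψ]
    simp only [map_add, map_smul, hNι, hz]
    module
  · ext v
    rw [mem_ExtConsSt_Fil, smul_zero, sub_zero, hFil i, Submodule.mem_comap]
    have : v ∈ (SV.Fil i).map ψ.symm.toLinearMap ↔ ψ v ∈ SV.Fil i := by
      constructor
      · rintro ⟨w, hw, rfl⟩
        simpa using hw
      · exact fun hv => ⟨ψ v, hv, by simp⟩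
    rw [this, hψ]
    rcases le_or_gt i 0 with hi | hi
    · rw [Submodule.add_mem_iff_left _ (Submodule.smul_mem _ _ (hanti hi he))]
      exact ⟨fun h => ⟨fun h' => absurd h' (not_lt.2 hi), h⟩, fun h => h.2⟩
    · constructor
      · intro hv
        have h2 : π (ι v.1 + v.2 • e) ∈ (SV.Fil i).map π := Submodule.mem_map_of_mem hv
        rw [hneg i hi, Submodule.mem_bot] at h2
        replace h2 : v.2 = 0 := by simpa [hπι, hπe] using h2
        exact ⟨fun _ => h2, by simpa [h2] using hv⟩
      · rintro ⟨h2, h1⟩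
        simpa [h2 hi] using h1
  · refine LinearMap.ext fun m => ?_
    simp only [LinearMap.comp_apply, LinearEquiv.coe_coe]
    rw [LinearEquiv.symm_apply_eq, hψ]
    simp
  · refine LinearMap.ext fun v => ?_
    obtain ⟨w, rfl⟩ := ψ.surjective v
    rw [LinearMap.comp_apply, LinearEquiv.coe_coe, LinearEquiv.symm_apply_apply]
    exact (hπψ₀ w).symm

/-- An equivalence `E(x,y,z) → E(x',y',z')` is determined by `u ∈ M` with `e ↦ e + u`; the
conditions on `u` express compatibility with `Fil`, `φ` and `N`. -/
theorem extEquivSt_ExtConsSt_iff {SM : PreFPNMod p M} (hM : IsFPNMod p SM)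
    (x y z x' y' z' : M) :
    ExtEquivSt p (ExtConsSt p SM x y z)
        (LinearMap.inl ℚ_[p] M ℚ_[p]) (LinearMap.snd ℚ_[p] M ℚ_[p])
        (ExtConsSt p SM x' y' z')
        (LinearMap.inl ℚ_[p] M ℚ_[p]) (LinearMap.snd ℚ_[p] M ℚ_[p]) ↔
      ∃ u : M, x' - x - u ∈ SM.Fil 0 ∧
        y' = y - (SM.phi u - u) ∧ z' = z - SM.N u := by
  have hanti := hM.2.2.2.1
  constructor
  · rintro ⟨θ, -, hφ, hN, hFil, hι, hπ⟩
    -- `θ e = e + u`.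
    obtain ⟨u, hu⟩ : ∃ u, θ (0, 1) = (u, 1) :=
      ⟨(θ (0, 1)).1, Prod.ext rfl (LinearMap.congr_fun hπ (0, 1))⟩
    have hθ : ∀ v, θ v = (v.1 + v.2 • u, v.2) := fun v => by
      have h1 : θ (v.1, 0) = (v.1, 0) := LinearMap.congr_fun hι v.1
      have h2 : v = (v.1, 0) + v.2 • ((0, 1) : M × ℚ_[p]) := by ext <;> simp
      conv_lhs => rw [h2, map_add, map_smul, h1, hu]
      ext <;> simp
    refine ⟨u, ?_, ?_, ?_⟩
    · have h1 : θ (x, 1) ∈ (ExtConsSt p SM x' y' z').Fil 0 := by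
        rw [← hFil 0]
        exact Submodule.mem_map_of_mem ((mem_ExtConsSt_Fil ..).2 ⟨by simp, by simp⟩)
      rw [hθ, mem_ExtConsSt_Fil] at h1
      have h2 := neg_mem h1.2
      convert h2 using 1
      module
    · have h1 := congrArg Prod.fst (LinearMap.congr_fun hφ (0, 1))
      simp [hθ, ExtConsSt_phi_apply] at h1
      rw [eq_sub_of_add_eq' h1.symm]
      abel
    · have h1 := congrArg Prod.fst (LinearMap.congr_fun hN (0, 1))
      simp [hθ, ExtConsSt_N_apply] at h1
      rw [h1]
      abel
  · rintro ⟨u, hx, rfl, rfl⟩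
    let θ : M × ℚ_[p] →ₗ[ℚ_[p]] M × ℚ_[p] :=
      LinearMap.id + (LinearMap.inl ℚ_[p] M ℚ_[p]) ∘ₗ
        ((LinearMap.snd ℚ_[p] M ℚ_[p]).smulRight u)
    have hθ : ∀ v, θ v = (v.1 + v.2 • u, v.2) := fun v => by ext <;> simp [θ]
    have hinv : ∀ v, θ (v.1 - v.2 • u, v.2) = v := fun v => by ext <;> simp [hθ]
    refine ⟨θ, ⟨?_, fun v => ⟨_, hinv v⟩⟩, ?_, ?_, fun i => ?_, ?_, ?_⟩
    · rintro ⟨m, c⟩ ⟨m', c'⟩ hv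
      simp only [hθ, Prod.mk.injEq] at hv
      obtain ⟨h1, rfl⟩ := hv
      rw [add_right_cancel h1]
    · refine LinearMap.ext fun v => ?_
      simp only [LinearMap.comp_apply, hθ, ExtConsSt_phi_apply, map_add, map_smul, Prod.mk.injEq,
        and_true]
      module
    · refine LinearMap.ext fun v => ?_
      simp only [LinearMap.comp_apply, hθ, ExtConsSt_N_apply, map_add, map_smul, Prod.mk.injEq,
        and_true]
      module
    · have key : ∀ v, θ v ∈ (ExtConsSt p SM x' (y - (SM.phi u - u)) (z - SM.N u)).Fil i ↔
          v ∈ (ExtConsSt p SM x y z).Fil i := by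
        intro v
        rw [mem_ExtConsSt_Fil, mem_ExtConsSt_Fil, hθ]
        refine and_congr_right fun h0 => ?_
        -- The two first coordinates differ by a multiple of `x' - x - u`, and by `0` if `i > 0`.
        have hmem : v.2 • (x' - x - u) ∈ SM.Fil i := by
          rcases le_or_gt i 0 with hi | hi
          · exact Submodule.smul_mem _ _ (hanti hi hx)
          · simp only at h0
            simp [h0 hi]
        rw [← Submodule.add_mem_iff_left _ hmem]
        congr! 1
        module
      ext v
      constructor
      · rintro ⟨w, hw, rfl⟩
        exact (key w).2 hw
      · intro hv
        refine ⟨_, (key _).1 ?_, hinv v⟩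
        rwa [hinv v]
    · ext m <;> simp [hθ]
    · refine LinearMap.ext fun v => ?_
      simp [hθ]

theorem mem_ker_hSt (SM : PreFPNMod p M) (a : (M ⧸ SM.Fil 0) × M × M) :
    a ∈ LinearMap.ker (hSt p SM) ↔
      SM.N a.2.1 = ((p : ℚ_[p]) • SM.phi - LinearMap.id : M →ₗ[ℚ_[p]] M) a.2.2 := by
  rw [LinearMap.mem_ker]
  exact sub_eq_zero

/-- The class in `H¹(C•_st(M))` of a cocycle `(x,y,z)`, with `x` reduced modulo `Fil⁰ M`. -/
noncomputable def classSt (SM : PreFPNMod p M)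
    (a : {t : M × M × M //
      SM.N t.2.1 = ((p : ℚ_[p]) • SM.phi - LinearMap.id : M →ₗ[ℚ_[p]] M) t.2.2}) :
    H1St p SM :=
  Submodule.Quotient.mk ⟨(Submodule.Quotient.mk a.1.1, a.1.2), (mem_ker_hSt SM _).2 a.2⟩

theorem classSt_eq_iff (SM : PreFPNMod p M)
    (a b : {t : M × M × M //
      SM.N t.2.1 = ((p : ℚ_[p]) • SM.phi - LinearMap.id : M →ₗ[ℚ_[p]] M) t.2.2}) :
    classSt SM a = classSt SM b ↔ CobRelSt p SM a b := by
  rw [eq_comm, classSt, classSt, Submodule.Quotient.eq, Submodule.mem_comap,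
    LinearMap.mem_range, CobRelSt]
  refine exists_congr fun u => ?_
  obtain ⟨⟨x, y, z⟩, ha⟩ := a
  obtain ⟨⟨x', y', z'⟩, hb⟩ := b
  have h1 : (Submodule.Quotient.mk u : M ⧸ SM.Fil 0) =
      Submodule.Quotient.mk x' - Submodule.Quotient.mk x ↔ x' - x - u ∈ SM.Fil 0 := by
    rw [← Submodule.Quotient.mk_sub, eq_comm, Submodule.Quotient.eq]
  have h2 : u - SM.phi u = y' - y ↔ y' = y - (SM.phi u - u) := by
    rw [eq_comm, sub_eq_iff_eq_add]
    constructor <;> rintro rfl <;> abel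
  have h3 : -SM.N u = z' - z ↔ z' = z - SM.N u := by
    rw [eq_comm, sub_eq_iff_eq_add]
    constructor <;> rintro rfl <;> abel
  rw [← h1, ← h2, ← h3, ← Prod.mk.injEq, ← Prod.mk.injEq]
  rfl

theorem classSt_surjective (SM : PreFPNMod p M) : Function.Surjective (classSt SM) := by
  intro q
  obtain ⟨⟨⟨xb, y, z⟩, h⟩, rfl⟩ := Submodule.Quotient.mk_surjective _ q
  obtain ⟨x, rfl⟩ := Submodule.Quotient.mk_surjective _ xb
  exact ⟨⟨(x, y, z), (mem_ker_hSt SM _).1 h⟩, rfl⟩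

theorem nonempty_quot_equiv_H1St (SM : PreFPNMod p M) :
    Nonempty (Quot (CobRelSt p SM) ≃ H1St p SM) := by
  refine ⟨Equiv.ofBijective
    (Quot.lift (classSt SM) fun a b h => (classSt_eq_iff SM a b).2 h) ⟨?_, fun q => ?_⟩⟩
  · rintro ⟨a⟩ ⟨b⟩ h
    exact Quot.sound ((classSt_eq_iff SM a b).1 h)
  · obtain ⟨a, rfl⟩ := classSt_surjective SM q
    exact ⟨Quot.mk _ a, rfl⟩

variable (p)

theorem benois_ext_classification_st
    (SM : PreFPNMod p M) (hM : IsFPNMod p SM) :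
    -- (a) for each cocycle `(x,y,z)`, `E(x,y,z)` is a filtered `(φ,N)`-module and an
    -- extension of `1` by `M`
    (∀ x y z : M, SM.N y = ((p : ℚ_[p]) • SM.phi - LinearMap.id : M →ₗ[ℚ_[p]] M) z →
      IsExtensionSt p SM (ExtConsSt p SM x y z)
        (LinearMap.inl ℚ_[p] M ℚ_[p]) (LinearMap.snd ℚ_[p] M ℚ_[p])) ∧
    -- (b) every extension of `1` by `M` is equivalent to some `E(x,y,z)`
    (∀ (V : Type) [AddCommGroup V], ∀ [Module ℚ_[p] V],
      ∀ (SV : PreFPNMod p V) (ι : M →ₗ[ℚ_[p]] V) (π : V →ₗ[ℚ_[p]] ℚ_[p]),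
      IsExtensionSt p SM SV ι π →
      ∃ x y z : M, SM.N y = ((p : ℚ_[p]) • SM.phi - LinearMap.id : M →ₗ[ℚ_[p]] M) z ∧
        ExtEquivSt p SV ι π (ExtConsSt p SM x y z)
          (LinearMap.inl ℚ_[p] M ℚ_[p]) (LinearMap.snd ℚ_[p] M ℚ_[p])) ∧
    -- (c) `E(x,y,z) ∼ E(x',y',z')` iff `∃ u, x' ∈ x + u + Fil⁰M`, `y' = y − (φ−1)u`,
    -- `z' = z − N u`
    (∀ x y z x' y' z' : M,
      SM.N y = ((p : ℚ_[p]) • SM.phi - LinearMap.id : M →ₗ[ℚ_[p]] M) z →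
      SM.N y' = ((p : ℚ_[p]) • SM.phi - LinearMap.id : M →ₗ[ℚ_[p]] M) z' →
      (ExtEquivSt p (ExtConsSt p SM x y z)
          (LinearMap.inl ℚ_[p] M ℚ_[p]) (LinearMap.snd ℚ_[p] M ℚ_[p])
          (ExtConsSt p SM x' y' z')
          (LinearMap.inl ℚ_[p] M ℚ_[p]) (LinearMap.snd ℚ_[p] M ℚ_[p]) ↔
        ∃ u : M, x' - x - u ∈ SM.Fil 0 ∧
          y' = y - (SM.phi u - u) ∧ z' = z - SM.N u)) ∧
    -- consequently the equivalence classes are in bijection with `H¹(C•_st(M))`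
    Nonempty (Quot (CobRelSt p SM) ≃ H1St p SM) := by
  exact ⟨ExtConsSt_isExtensionSt hM, fun V _ _ SV ι π hE => exists_equiv_ExtConsSt hE,
    fun x y z x' y' z' _ _ => extEquivSt_ExtConsSt_iff hM x y z x' y' z',
    nonempty_quot_equiv_H1St SM⟩

end
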